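/- arXiv:2205.05786 — 8 statements merged into one kernel-verified Lean document; each statement's English description precedes it below -/
import Mathlib

section
/- Let E be a real inner product space, d a positive integer, C > 0, τ > 0 with d·τ² > 1, and M : Fin d → E with ‖M i‖² ≤ C for all i and |⟪M i, M j⟫| ≤ C/d for all i ≠ j. Then for every O ∈ E with ‖O‖² ≤ C, the set S = { i : Fin d | ⟪O, M i⟫ > C·τ } satisfies |S| ≤ d / (d·τ² − 1). -/
/-!
Let `S` be the set of hypotheses correlating above `C * τ` with `O`, let `n = |S|`, and put
`V = ∑ i ∈ S, M i`. The near-orthogonality of the family gives `‖V‖² ≤ n C + n² C / d`, while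
`n C τ ≤ ⟪O, V⟫ ≤ ‖O‖ ‖V‖` by Cauchy–Schwarz. Squaring, `n² τ² ≤ n + n² / d`, which rearranges
to `n (d τ² - 1) ≤ d`.
-/

open scoped RealInnerProductSpace

/-- A single statistical query eliminates few hypotheses (one-sided version): for vectors
`M : Fin d → E` with `‖M i‖² ≤ C` and pairwise correlations `|⟪M i, M j⟫| ≤ C / d`, any
query `O` with `‖O‖² ≤ C` correlates above `C·τ` with at most `d / (d·τ² − 1)` of them. -/
theorem sq_query_eliminates_few_one_sided
    {E : Type*} [NormedAddCommGroup E] [InnerProductSpace ℝ E]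
    (d : ℕ) (hd : 0 < d) (C τ : ℝ) (hC : 0 < C) (hτ : 0 < τ)
    (hdτ : 1 < (d : ℝ) * τ ^ 2)
    (M : Fin d → E)
    (hnorm : ∀ i : Fin d, ‖M i‖ ^ 2 ≤ C)
    (hcorr : ∀ i j : Fin d, i ≠ j → |⟪M i, M j⟫| ≤ C / d) :
    ∀ O : E, ‖O‖ ^ 2 ≤ C →
      ((Set.ncard {i : Fin d | C * τ < ⟪O, M i⟫} : ℝ)) ≤
        (d : ℝ) / ((d : ℝ) * τ ^ 2 - 1) := by
  intro O hO
  classical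
  set S : Finset (Fin d) := Finset.univ.filter (fun i => C * τ < ⟪O, M i⟫) with hS
  have hcard : Set.ncard {i : Fin d | C * τ < ⟪O, M i⟫} = S.card := by
    rw [← Set.ncard_coe_finset]
    congr 1
    ext i
    simp [hS]
  rw [hcard]
  have hd' : (0 : ℝ) < d := by exact_mod_cast hd
  have hn0 : (0 : ℝ) ≤ S.card := Nat.cast_nonneg _
  generalize hn : (S.card : ℝ) = n at *
  have hlower : n * (C * τ) ≤ ⟪O, ∑ i ∈ S, M i⟫ := by
    rw [inner_sum, ← hn, ← nsmul_eq_mul]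
    exact Finset.card_nsmul_le_sum _ _ _ fun i hi => (Finset.mem_filter.mp hi).2.le
  have hupper : ‖∑ i ∈ S, M i‖ ^ 2 ≤ n * C + n ^ 2 * (C / d) := by
    rw [← real_inner_self_eq_norm_sq, sum_inner]
    calc ∑ i ∈ S, ⟪M i, ∑ j ∈ S, M j⟫
        ≤ ∑ i ∈ S, ∑ j ∈ S, ((if i = j then C else 0) + C / d) := by
          refine Finset.sum_le_sum fun i _ => ?_
          rw [inner_sum]
          refine Finset.sum_le_sum fun j _ => ?_
          split_ifs with hij
          · subst hij
            rw [real_inner_self_eq_norm_sq]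
            have := hnorm i
            have : 0 < C / d := by positivity
            linarith
          · linarith [le_abs_self ⟪M i, M j⟫, hcorr i j hij]
      _ = n * C + n ^ 2 * (C / d) := by
          simp [Finset.sum_add_distrib, hn]
          ring
  have hcs : ⟪O, ∑ i ∈ S, M i⟫ ≤ ‖O‖ * ‖∑ i ∈ S, M i‖ := real_inner_le_norm _ _
  have hsq : (n * (C * τ)) ^ 2 ≤ C * (n * C + n ^ 2 * (C / d)) :=
    calc (n * (C * τ)) ^ 2 ≤ (‖O‖ * ‖∑ i ∈ S, M i‖) ^ 2 :=
          pow_le_pow_left₀ (by positivity) (hlower.trans hcs) 2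
      _ = ‖O‖ ^ 2 * ‖∑ i ∈ S, M i‖ ^ 2 := mul_pow _ _ _
      _ ≤ C * (n * C + n ^ 2 * (C / d)) := by gcongr
  rw [le_div_iff₀ (by linarith)]
  rcases hn0.eq_or_lt with h0 | hpos
  · rw [← h0]
    linarith
  · -- Cancel the common positive factor `n * C ^ 2 / d` from `hsq`.
    refine le_of_mul_le_mul_left ?_ (show 0 < n * C ^ 2 / d by positivity)
    have e : n * C ^ 2 / d * (n * (d * τ ^ 2 - 1)) - n * C ^ 2 / d * d
        = (n * (C * τ)) ^ 2 - C * (n * C + n ^ 2 * (C / d)) := by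
      field_simp
      ring
    linarith
end

section
/- Let E be a real inner product space, d a positive integer, C > 0, τ > 0 with d·τ² > 1, and M : Fin d → E with ‖M i‖² ≤ C for all i and |⟪M i, M j⟫| ≤ C/d for all i ≠ j. Then for every O ∈ E with ‖O‖² ≤ C, the set of indices i with |⟪O, M i⟫| > C·τ has cardinality at most 2·d / (d·τ² − 1). -/
/-!
Let `A` be the set of eliminated hypotheses, `a = |A|`, and let `v = ∑ i ∈ A, s i • M i`, where
`s i = ±1` satisfies `s i * ⟪O, M i⟫ = |⟪O, M i⟫|`. Then `a * (C * τ) ≤ ⟪O, v⟫ ≤ ‖O‖ * ‖v‖` by Cauchy–Schwarz, while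
expanding the square gives `‖v‖² ≤ a * C + a² * (C / d)`. Squaring and cancelling `C² * a` yields
`a * (d * τ² - 1) ≤ d`, which is stronger than the claim by a factor of two.
-/

open scoped RealInnerProductSpace

/-- Expanding the square: the diagonal terms contribute at most `#A * C`, and the off-diagonal
ones, of which there are at most `(#A)²`, at most `K` each. -/
lemma norm_sq_signed_sum_le {E ι : Type*} [NormedAddCommGroup E] [InnerProductSpace ℝ E]
    [DecidableEq ι] (A : Finset ι) (M : ι → E) (s : ι → ℝ) (C K : ℝ) (hK : 0 ≤ K)
    (hs : ∀ i, |s i| ≤ 1) (hnorm : ∀ i, ‖M i‖ ^ 2 ≤ C)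
    (hcorr : ∀ i j, i ≠ j → |⟪M i, M j⟫| ≤ K) :
    ‖∑ i ∈ A, s i • M i‖ ^ 2 ≤ A.card * C + (A.card : ℝ) ^ 2 * K := by
  have hterm : ∀ i j, ⟪s i • M i, s j • M j⟫ ≤ (if i = j then C else 0) + K := by
    intro i j
    have h1 : ⟪s i • M i, s j • M j⟫ ≤ |⟪M i, M j⟫| := by
      rw [real_inner_smul_left, real_inner_smul_right, ← mul_assoc]
      refine (le_abs_self _).trans ?_
      rw [abs_mul, abs_mul]
      exact mul_le_of_le_one_left (abs_nonneg _)
        (mul_le_one₀ (hs i) (abs_nonneg _) (hs j))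
    refine h1.trans ?_
    by_cases hij : i = j
    · subst hij
      rw [real_inner_self_eq_norm_sq, abs_of_nonneg (sq_nonneg _), if_pos rfl]
      linarith [hnorm i]
    · rw [if_neg hij, zero_add]
      exact hcorr i j hij
  rw [← real_inner_self_eq_norm_sq, sum_inner]
  simp_rw [inner_sum]
  refine (Finset.sum_le_sum fun i _ => Finset.sum_le_sum fun j _ => hterm i j).trans ?_
  simp only [Finset.sum_add_distrib, Finset.sum_ite_eq, Finset.sum_const, nsmul_eq_mul,
    Finset.sum_ite_mem, Finset.inter_self]
  exact le_of_eq (by ring)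

/-- A single statistical query eliminates few hypotheses: for vectors `M : Fin d → E` with
`‖M i‖² ≤ C` and pairwise correlations `|⟪M i, M j⟫| ≤ C / d`, any query `O` with
`‖O‖² ≤ C` has correlation of magnitude exceeding `C·τ` with at most `2·d / (d·τ² − 1)`
of the hypotheses. -/
theorem sq_query_eliminates_few
    {E : Type*} [NormedAddCommGroup E] [InnerProductSpace ℝ E]
    (d : ℕ) (hd : 0 < d) (C τ : ℝ) (hC : 0 < C) (hτ : 0 < τ)
    (hdτ : 1 < (d : ℝ) * τ ^ 2)
    (M : Fin d → E)
    (hnorm : ∀ i : Fin d, ‖M i‖ ^ 2 ≤ C)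
    (hcorr : ∀ i j : Fin d, i ≠ j → |⟪M i, M j⟫| ≤ C / d) :
    ∀ O : E, ‖O‖ ^ 2 ≤ C →
      ((Set.ncard {i : Fin d | C * τ < |⟪O, M i⟫|} : ℝ)) ≤
        2 * (d : ℝ) / ((d : ℝ) * τ ^ 2 - 1) := by
  classical
  intro O hO
  have hd' : (0 : ℝ) < d := by exact_mod_cast hd
  have hsign : ∀ i, ∃ s : ℝ, |s| ≤ 1 ∧ s * ⟪O, M i⟫ = |⟪O, M i⟫| := by
    intro i
    rcases le_total 0 ⟪O, M i⟫ with h | h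
    · exact ⟨1, by simp, by rw [abs_of_nonneg h, one_mul]⟩
    · exact ⟨-1, by simp, by rw [abs_of_nonpos h, neg_one_mul]⟩
  choose s hs1 hs2 using hsign
  set A : Finset (Fin d) := Finset.univ.filter fun i => C * τ < |⟪O, M i⟫| with hA
  have hcard : Set.ncard {i : Fin d | C * τ < |⟪O, M i⟫|} = A.card := by
    rw [← Set.ncard_coe_finset]
    simp [hA]
  rw [hcard]
  have hv := norm_sq_signed_sum_le A M s C (C / d) (by positivity) hs1 hnorm hcorr
  set v := ∑ i ∈ A, s i • M i with hvdef
  have hlow : (A.card : ℝ) * (C * τ) ≤ ⟪O, v⟫ := by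
    rw [hvdef, inner_sum, ← nsmul_eq_mul]
    refine Finset.card_nsmul_le_sum _ _ _ fun i hi => ?_
    rw [real_inner_smul_right, hs2]
    exact (Finset.mem_filter.mp hi).2.le
  have hsq : ((A.card : ℝ) * (C * τ)) ^ 2 ≤ C * (A.card * C + (A.card : ℝ) ^ 2 * (C / d)) := by
    calc ((A.card : ℝ) * (C * τ)) ^ 2 ≤ (‖O‖ * ‖v‖) ^ 2 :=
          pow_le_pow_left₀ (by positivity) (hlow.trans (real_inner_le_norm O v)) 2
      _ = ‖O‖ ^ 2 * ‖v‖ ^ 2 := mul_pow _ _ _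
      _ ≤ _ := mul_le_mul hO hv (sq_nonneg _) hC.le
  rw [le_div_iff₀ (by linarith)]
  rcases (Nat.cast_nonneg A.card : (0 : ℝ) ≤ A.card).eq_or_lt with h0 | hpos
  · rw [← h0]
    linarith
  · have hk : C ^ 2 * A.card / d * (A.card * (d * τ ^ 2 - 1)) ≤ C ^ 2 * A.card / d * d := by
      have e1 : C ^ 2 * A.card / d * (A.card * (d * τ ^ 2 - 1))
          = ((A.card : ℝ) * (C * τ)) ^ 2 - C * ((A.card : ℝ) ^ 2 * (C / d)) := by
        field_simp
      have e2 : C ^ 2 * A.card / d * d = C * (A.card * C) := by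
        field_simp
      rw [e1, e2]
      linarith
    have := le_of_mul_le_mul_left hk (by positivity)
    linarith
end

section
/- Let N be a positive integer and let μ be the Haar probability measure on the unitary group U(N) of N×N complex matrices. Then for all indices i, j, k, l ∈ Fin N: ∫ U, (U i j) · conj(U k l) dμ(U) equals 1/N if i = k and j = l, and equals 0 otherwise. -/
open MeasureTheory

/-!
Only left invariance of `μ` is needed. Left multiplication by the diagonal sign matrix that flips
row `i` changes the sign of `U i j * conj (U k l)` when `i ≠ k`, so that moment vanishes. Left
multiplication by a transposition matrix shows that `E[U i j * conj (U i l)]` does not depend on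
`i`; summing over the `N` rows gives `E[(Uᴴ * U) l j] = δ_{lj}`, hence each row contributes
`δ_{jl} / N`.
-/

theorem haar_first_moment_left_mul {N : ℕ}
    [MeasurableSpace (Matrix.unitaryGroup (Fin N) ℂ)]
    [BorelSpace (Matrix.unitaryGroup (Fin N) ℂ)]
    (μ : Measure (Matrix.unitaryGroup (Fin N) ℂ)) [μ.IsHaarMeasure]
    (A : Matrix (Fin N) (Fin N) ℂ) (hA : A ∈ Matrix.unitaryGroup (Fin N) ℂ)
    (i j k l : Fin N) :
    ∫ U : Matrix.unitaryGroup (Fin N) ℂ,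
        (A * (U : Matrix (Fin N) (Fin N) ℂ)) i j *
          (starRingEnd ℂ) ((A * (U : Matrix (Fin N) (Fin N) ℂ)) k l) ∂μ =
    ∫ U : Matrix.unitaryGroup (Fin N) ℂ,
        (U : Matrix (Fin N) (Fin N) ℂ) i j *
          (starRingEnd ℂ) ((U : Matrix (Fin N) (Fin N) ℂ) k l) ∂μ :=
  integral_mul_left_eq_self (μ := μ)
    (fun U : Matrix.unitaryGroup (Fin N) ℂ =>
      (U : Matrix (Fin N) (Fin N) ℂ) i j *
        (starRingEnd ℂ) ((U : Matrix (Fin N) (Fin N) ℂ) k l)) ⟨A, hA⟩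

theorem haar_first_moment_integrable {N : ℕ}
    [MeasurableSpace (Matrix.unitaryGroup (Fin N) ℂ)]
    [BorelSpace (Matrix.unitaryGroup (Fin N) ℂ)]
    (μ : Measure (Matrix.unitaryGroup (Fin N) ℂ)) [IsProbabilityMeasure μ]
    (i j k l : Fin N) :
    Integrable (fun U : Matrix.unitaryGroup (Fin N) ℂ =>
      (U : Matrix (Fin N) (Fin N) ℂ) i j *
        (starRingEnd ℂ) ((U : Matrix (Fin N) (Fin N) ℂ) k l)) μ := by
  have hc (a b : Fin N) : Continuous (fun U : Matrix.unitaryGroup (Fin N) ℂ =>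
      (U : Matrix (Fin N) (Fin N) ℂ) a b) :=
    continuous_subtype_val.matrix_elem a b
  refine Integrable.of_bound
    ((hc i j).mul (Complex.continuous_conj.comp (hc k l))).aestronglyMeasurable 1
    (Filter.Eventually.of_forall fun U => ?_)
  rw [norm_mul, RCLike.norm_conj]
  exact mul_le_one₀ (entry_norm_bound_of_unitary U.2 i j) (norm_nonneg _)
    (entry_norm_bound_of_unitary U.2 k l)

/-- Distinct rows are uncorrelated: flipping the sign of row `i` negates the moment. -/
theorem haar_first_moment_of_row_ne {N : ℕ}
    [MeasurableSpace (Matrix.unitaryGroup (Fin N) ℂ)]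
    [BorelSpace (Matrix.unitaryGroup (Fin N) ℂ)]
    (μ : Measure (Matrix.unitaryGroup (Fin N) ℂ)) [μ.IsHaarMeasure]
    {i k : Fin N} (hik : i ≠ k) (j l : Fin N) :
    ∫ U : Matrix.unitaryGroup (Fin N) ℂ,
        (U : Matrix (Fin N) (Fin N) ℂ) i j *
          (starRingEnd ℂ) ((U : Matrix (Fin N) (Fin N) ℂ) k l) ∂μ = 0 := by
  let d : Fin N → ℂ := fun a => if a = i then -1 else 1
  have hd : Matrix.diagonal d ∈ Matrix.unitaryGroup (Fin N) ℂ := by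
    rw [Matrix.mem_unitaryGroup_iff, Matrix.star_eq_conjTranspose,
      Matrix.diagonal_conjTranspose, Matrix.diagonal_mul_diagonal, ← Matrix.diagonal_one]
    congr 1
    funext a
    by_cases h : a = i <;> simp [d, h]
  have h := haar_first_moment_left_mul μ _ hd i j k l
  simp only [Matrix.diagonal_mul, d, if_true, if_neg hik.symm, one_mul, neg_mul,
    integral_neg] at h
  exact self_eq_neg.mp h.symm

/-- Exchanging two rows by a transposition matrix leaves the same-row moment unchanged. -/
theorem haar_first_moment_row_eq {N : ℕ}
    [MeasurableSpace (Matrix.unitaryGroup (Fin N) ℂ)]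
    [BorelSpace (Matrix.unitaryGroup (Fin N) ℂ)]
    (μ : Measure (Matrix.unitaryGroup (Fin N) ℂ)) [μ.IsHaarMeasure]
    (a i j l : Fin N) :
    ∫ U : Matrix.unitaryGroup (Fin N) ℂ,
        (U : Matrix (Fin N) (Fin N) ℂ) a j *
          (starRingEnd ℂ) ((U : Matrix (Fin N) (Fin N) ℂ) a l) ∂μ =
    ∫ U : Matrix.unitaryGroup (Fin N) ℂ,
        (U : Matrix (Fin N) (Fin N) ℂ) i j *
          (starRingEnd ℂ) ((U : Matrix (Fin N) (Fin N) ℂ) i l) ∂μ := by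
  have hP : (Equiv.swap i a).permMatrix ℂ ∈ Matrix.unitaryGroup (Fin N) ℂ := by
    rw [Matrix.mem_unitaryGroup_iff, Matrix.star_eq_conjTranspose,
      Matrix.conjTranspose_permMatrix, ← Matrix.permMatrix_mul]
    simp
  have h := haar_first_moment_left_mul μ _ hP i j i l
  simpa [Equiv.Perm.permMatrix, PEquiv.toMatrix_toPEquiv_mul] using h

/-- First-moment Weingarten formula, entrywise: for Haar-random `U` in the unitary group
`U(N)`, `E[U i j · conj (U k l)]` equals `1/N` if `(i,j) = (k,l)` and `0` otherwise. -/
theorem haar_unitary_first_moment (N : ℕ) (hN : 0 < N)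
    [MeasurableSpace (Matrix.unitaryGroup (Fin N) ℂ)]
    [BorelSpace (Matrix.unitaryGroup (Fin N) ℂ)]
    (μ : Measure (Matrix.unitaryGroup (Fin N) ℂ))
    [μ.IsHaarMeasure] [IsProbabilityMeasure μ]
    (i j k l : Fin N) :
    ∫ U : Matrix.unitaryGroup (Fin N) ℂ,
        (U : Matrix (Fin N) (Fin N) ℂ) i j *
          (starRingEnd ℂ) ((U : Matrix (Fin N) (Fin N) ℂ) k l) ∂μ =
      if i = k ∧ j = l then (1 : ℂ) / N else 0 := by
  by_cases hik : i = k
  · subst hik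
    have hN0 : (N : ℂ) ≠ 0 := Nat.cast_ne_zero.mpr hN.ne'
    have hcol (U : Matrix.unitaryGroup (Fin N) ℂ) :
        ∑ a, (U : Matrix (Fin N) (Fin N) ℂ) a j *
          (starRingEnd ℂ) ((U : Matrix (Fin N) (Fin N) ℂ) a l) =
        if j = l then 1 else 0 := by
      have h := congrFun (congrFun (Matrix.mem_unitaryGroup_iff'.mp U.2) l) j
      rw [Matrix.mul_apply, Matrix.one_apply] at h
      simpa [Matrix.star_apply, mul_comm, eq_comm] using h
    have hsum := integral_finsetSum (μ := μ) Finset.univ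
      (fun a _ => haar_first_moment_integrable μ a j a l)
    simp only [hcol, haar_first_moment_row_eq μ _ i j l] at hsum
    simp only [integral_const, probReal_univ, one_smul, Finset.sum_const, Finset.card_univ,
      Fintype.card_fin, nsmul_eq_mul] at hsum
    rw [← mul_right_inj' hN0, ← hsum]
    by_cases hjl : j = l <;> simp [hjl, hN0]
  · simp [hik, haar_first_moment_of_row_ne μ hik j l]
end

section
/- Let N be a positive integer, μ the Haar probability measure on the unitary group U(N) of N×N complex matrices, and A any N×N complex matrix. Then the Bochner integral ∫ U, Uᴴ · A · U dμ(U) equals (Tr(A)/N) • I, where I is the N×N identity matrix. -/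
/-!
Left invariance of `μ` says that the linear map `φ A = ∫ Uᴴ A U` satisfies `φ (Vᴴ A V) = φ A` for
every unitary `V`. Such a map is a multiple of the trace (`natCast_smul_eq_trace_smul`): a diagonal
sign matrix gives `φ (E i j) = -φ (E i j)` for `i ≠ j`, and a transposition matrix gives
`φ (E i i) = φ (E j j)`. Hence `N • φ A = Tr A • φ 1`, and `φ 1 = 1` since `Uᴴ U = 1` and `μ` is a
probability measure. Keeping the conjugation on the `A` side means that right invariance of `μ` is
not needed. Integrability follows from compactness of the unitary group.
-/

open MeasureTheory Matrix

attribute [local instance] Matrix.normedAddCommGroup Matrix.normedSpace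

instance compactSpace_unitaryGroup (N : ℕ) : CompactSpace (Matrix.unitaryGroup (Fin N) ℂ) := by
  have : ProperSpace (Matrix (Fin N) (Fin N) ℂ) := FiniteDimensional.proper ℂ _
  have hclosed : IsClosed (Matrix.unitaryGroup (Fin N) ℂ : Set (Matrix (Fin N) (Fin N) ℂ)) :=
    isClosed_unitary
  refine isCompact_iff_compactSpace.mp (Metric.isCompact_of_isClosed_isBounded ?_ ?_)
  · exact hclosed
  · exact (isBounded_iff_forall_norm_le).mpr
      ⟨1, fun U hU => entrywise_sup_norm_bound_of_unitary hU⟩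

/-- The diagonal matrix with entry `-1` at `i` and `1` elsewhere. -/
def signUnitary {N : ℕ} (i : Fin N) : Matrix.unitaryGroup (Fin N) ℂ :=
  ⟨diagonal fun k => if k = i then -1 else 1, by
    rw [Matrix.mem_unitaryGroup_iff, star_eq_conjTranspose, diagonal_conjTranspose,
      diagonal_mul_diagonal, ← diagonal_one]
    congr 1
    ext k
    by_cases h : k = i <;> simp [h]⟩

/-- The permutation matrix of `σ`, with entry `1` at the positions `(k, σ k)`. -/
def permUnitary {N : ℕ} (σ : Equiv.Perm (Fin N)) : Matrix.unitaryGroup (Fin N) ℂ :=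
  ⟨(1 : Matrix (Fin N) (Fin N) ℂ).submatrix σ (Equiv.refl _), by
    rw [Matrix.mem_unitaryGroup_iff, star_eq_conjTranspose, conjTranspose_submatrix,
      submatrix_mul_equiv]
    simp⟩

theorem signUnitary_conj_single {N : ℕ} {i j : Fin N} (h : i ≠ j) :
    (signUnitary i : Matrix (Fin N) (Fin N) ℂ)ᴴ * single i j (1 : ℂ) *
      (signUnitary i : Matrix (Fin N) (Fin N) ℂ) = -single i j (1 : ℂ) := by
  ext k l
  simp only [signUnitary, diagonal_conjTranspose, diagonal_mul, mul_diagonal, single_apply,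
    Matrix.neg_apply, Pi.star_apply]
  by_cases hk : i = k ∧ j = l
  · obtain ⟨rfl, rfl⟩ := hk
    simp [h.symm]
  · simp [hk]

theorem permUnitary_conj_single {N : ℕ} (σ : Equiv.Perm (Fin N)) (i : Fin N) :
    (permUnitary σ : Matrix (Fin N) (Fin N) ℂ)ᴴ * single i i (1 : ℂ) *
      (permUnitary σ : Matrix (Fin N) (Fin N) ℂ) = single (σ i) (σ i) (1 : ℂ) := by
  ext k l
  simp [permUnitary, Matrix.mul_apply, single_apply, Matrix.one_apply, ite_and]
  rw [Finset.sum_eq_single i (fun j _ hj => by simp [hj.symm]) (by simp)]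
  by_cases hk : σ i = k <;> by_cases hl : σ i = l <;> simp [hk, hl, eq_comm]

/-- A linear map on matrices that is invariant under unitary conjugation is determined by its value
at `1` and is proportional to the trace. -/
theorem natCast_smul_eq_trace_smul {N : ℕ} {E : Type*} [AddCommGroup E] [Module ℂ E]
    (φ : Matrix (Fin N) (Fin N) ℂ →ₗ[ℂ] E)
    (hφ : ∀ (V : Matrix.unitaryGroup (Fin N) ℂ) (A : Matrix (Fin N) (Fin N) ℂ),
      φ ((V : Matrix (Fin N) (Fin N) ℂ)ᴴ * A * (V : Matrix (Fin N) (Fin N) ℂ)) = φ A)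
    (A : Matrix (Fin N) (Fin N) ℂ) : (N : ℂ) • φ A = A.trace • φ 1 := by
  have offdiag : ∀ i j : Fin N, i ≠ j → φ (single i j 1) = 0 := by
    intro i j h
    have h1 := hφ (signUnitary i) (single i j 1)
    rw [signUnitary_conj_single h, map_neg] at h1
    have h2 : (2 : ℂ) • φ (single i j 1) = 0 := by
      rw [two_smul]
      nth_rewrite 1 [← h1]
      simp
    exact (smul_eq_zero.mp h2).resolve_left two_ne_zero
  have diag : ∀ i j : Fin N, φ (single i i 1) = φ (single j j 1) := by
    intro i j
    have h1 := hφ (permUnitary (Equiv.swap i j)) (single i i 1)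
    rw [permUnitary_conj_single, Equiv.swap_apply_left] at h1
    exact h1.symm
  have expand : ∀ B : Matrix (Fin N) (Fin N) ℂ, φ B = ∑ i, B i i • φ (single i i 1) := by
    intro B
    conv_lhs => rw [matrix_eq_sum_single B]
    simp only [map_sum]
    refine Finset.sum_congr rfl fun i _ => ?_
    have hs : ∀ j, φ (single i j (B i j)) = B i j • φ (single i j 1) := fun j => by
      rw [← map_smul, smul_single, smul_eq_mul, mul_one]
    simp only [hs]
    refine Finset.sum_eq_single i (fun j _ hj => ?_) (by simp)
    rw [offdiag i j hj.symm, smul_zero]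
  have key : ∀ i, (N : ℂ) • φ (single i i 1) = φ 1 := by
    intro i
    rw [expand 1, Finset.sum_congr rfl fun j _ => by rw [diag j i]]
    simp [Nat.cast_smul_eq_nsmul]
  rw [expand A, Finset.smul_sum, Matrix.trace, Finset.sum_smul]
  refine Finset.sum_congr rfl fun i _ => ?_
  rw [smul_comm, key, diag_apply]

/-- Twirling identity for the Haar measure on the unitary group: for any `N × N` complex
matrix `A`, the Haar average of `Uᴴ · A · U` equals `(Tr A / N) • I`. -/
theorem haar_unitary_twirl (N : ℕ) (hN : 0 < N)
    [MeasurableSpace (Matrix.unitaryGroup (Fin N) ℂ)]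
    [BorelSpace (Matrix.unitaryGroup (Fin N) ℂ)]
    (μ : Measure (Matrix.unitaryGroup (Fin N) ℂ))
    [μ.IsHaarMeasure] [IsProbabilityMeasure μ]
    (A : Matrix (Fin N) (Fin N) ℂ) :
    ∫ U : Matrix.unitaryGroup (Fin N) ℂ,
        (U : Matrix (Fin N) (Fin N) ℂ)ᴴ * A * (U : Matrix (Fin N) (Fin N) ℂ) ∂μ =
      (A.trace / N) • (1 : Matrix (Fin N) (Fin N) ℂ) := by
  -- The topology is named because `Integrable` needs the one induced by the norm, which agrees with
  -- the product topology on matrices only after unfolding.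
  have hint : ∀ B : Matrix (Fin N) (Fin N) ℂ,
      @Integrable _ PseudoMetricSpace.toUniformSpace.toTopologicalSpace _ _ _ (fun U : Matrix.unitaryGroup (Fin N) ℂ =>
        (U : Matrix (Fin N) (Fin N) ℂ)ᴴ * B * (U : Matrix (Fin N) (Fin N) ℂ)) μ := by
    intro B
    refine Continuous.integrable_of_hasCompactSupport ?_ (HasCompactSupport.of_compactSpace _)
    exact ((continuous_subtype_val.matrix_conjTranspose).matrix_mul continuous_const).matrix_mul
      continuous_subtype_val
  let φ : Matrix (Fin N) (Fin N) ℂ →ₗ[ℂ] Matrix (Fin N) (Fin N) ℂ :=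
    { toFun := fun B => ∫ U : Matrix.unitaryGroup (Fin N) ℂ,
        (U : Matrix (Fin N) (Fin N) ℂ)ᴴ * B * (U : Matrix (Fin N) (Fin N) ℂ) ∂μ
      map_add' := fun B C => by
        rw [← integral_add (hint B) (hint C)]
        simp only [Matrix.mul_add, Matrix.add_mul]
      map_smul' := fun c B => by
        rw [RingHom.id_apply, ← integral_smul]
        simp only [Matrix.mul_smul, Matrix.smul_mul] }
  have hφ : ∀ (V : Matrix.unitaryGroup (Fin N) ℂ) (B : Matrix (Fin N) (Fin N) ℂ),
      φ ((V : Matrix (Fin N) (Fin N) ℂ)ᴴ * B * (V : Matrix (Fin N) (Fin N) ℂ)) = φ B := by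
    intro V B
    have h := integral_mul_left_eq_self (μ := μ) (fun U : Matrix.unitaryGroup (Fin N) ℂ =>
      (U : Matrix (Fin N) (Fin N) ℂ)ᴴ * B * (U : Matrix (Fin N) (Fin N) ℂ)) V
    refine Eq.trans ?_ h
    refine integral_congr_ae (Filter.Eventually.of_forall fun U => ?_)
    simp only [Submonoid.coe_mul, conjTranspose_mul, Matrix.mul_assoc]
  have hone : φ 1 = 1 := by
    have h : ∀ U : Matrix.unitaryGroup (Fin N) ℂ,
        (U : Matrix (Fin N) (Fin N) ℂ)ᴴ * 1 * (U : Matrix (Fin N) (Fin N) ℂ) = 1 := fun U => by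
      rw [Matrix.mul_one]
      exact Matrix.mem_unitaryGroup_iff'.mp U.2
    change ∫ U : Matrix.unitaryGroup (Fin N) ℂ,
        (U : Matrix (Fin N) (Fin N) ℂ)ᴴ * 1 * (U : Matrix (Fin N) (Fin N) ℂ) ∂μ = 1
    simp only [h, integral_const, probReal_univ, one_smul]
  have hN' : (N : ℂ) ≠ 0 := Nat.cast_ne_zero.mpr hN.ne'
  have main := natCast_smul_eq_trace_smul φ hφ A
  rw [hone] at main
  change φ A = _
  rw [div_eq_inv_mul, mul_smul, ← main, inv_smul_smul₀ hN']
end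

section
/- Let N be a positive integer, μ the Haar probability measure on the unitary group U(N) of N×N complex matrices, and W, V any N×N complex matrices. Then ∫ U, Re( (Uᴴ · Wᴴ · V · U) e₀ e₀ ) dμ(U) = N⁻¹ · Re( Tr(Wᴴ · V) ), where e₀ is a fixed index (the (e₀, e₀) entry is the expectation ⟨0| Uᴴ Wᴴ V U |0⟩ in the state U|0⟩). -/
open MeasureTheory Matrix

/-!
Expanding the matrix product, the integrand is `∑ i j, (Wᴴ V) i j * conj (U i e₀) * U j e₀`, so
only the second moments `∫ conj (U i e₀) * U j e₀` of one column of `U` matter. Left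
invariance of `μ` determines them: multiplying by the diagonal unitary that flips the sign of row `i`
kills the moments with `i ≠ j`, permuting rows shows that the diagonal moments are all equal, and they
sum to `1` because the columns of a unitary matrix are unit vectors. Hence each equals `N⁻¹`.
-/

section ColumnMoments

variable {N : ℕ}

lemma signFlip_mem_unitaryGroup (i : Fin N) :
    Matrix.diagonal (fun k => if k = i then (-1 : ℂ) else 1) ∈ Matrix.unitaryGroup (Fin N) ℂ := by
  rw [Matrix.mem_unitaryGroup_iff, Matrix.star_eq_conjTranspose, Matrix.diagonal_conjTranspose,
    Matrix.diagonal_mul_diagonal, ← Matrix.diagonal_one]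
  congr 1
  funext k
  by_cases h : k = i <;> simp [h]

lemma permMatrix_mem_unitaryGroup (σ : Equiv.Perm (Fin N)) :
    σ.permMatrix ℂ ∈ Matrix.unitaryGroup (Fin N) ℂ := by
  rw [Matrix.mem_unitaryGroup_iff, Matrix.star_eq_conjTranspose, Matrix.conjTranspose_permMatrix,
    ← Matrix.permMatrix_mul]
  simp

lemma sum_star_mul_self_column (U : Matrix.unitaryGroup (Fin N) ℂ) (e : Fin N) :
    ∑ i, star ((U : Matrix (Fin N) (Fin N) ℂ) i e) * (U : Matrix (Fin N) (Fin N) ℂ) i e = 1 := by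
  have h := congrFun (congrFun (Matrix.UnitaryGroup.star_mul_self U) e) e
  simpa [Matrix.mul_apply, Matrix.star_apply] using h

variable [MeasurableSpace (Matrix.unitaryGroup (Fin N) ℂ)]
  [BorelSpace (Matrix.unitaryGroup (Fin N) ℂ)] (μ : Measure (Matrix.unitaryGroup (Fin N) ℂ))

lemma integrable_column_moment [IsProbabilityMeasure μ] (e i j : Fin N) :
    Integrable (fun U : Matrix.unitaryGroup (Fin N) ℂ =>
      star ((U : Matrix (Fin N) (Fin N) ℂ) i e) * (U : Matrix (Fin N) (Fin N) ℂ) j e) μ := by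
  have hc : ∀ k, Continuous (fun U : Matrix.unitaryGroup (Fin N) ℂ =>
      (U : Matrix (Fin N) (Fin N) ℂ) k e) := fun k => continuous_subtype_val.matrix_elem k e
  refine Integrable.of_bound ((hc i).star.mul (hc j)).aestronglyMeasurable 1 (.of_forall fun U => ?_)
  rw [norm_mul, norm_star]
  exact mul_le_one₀ (entry_norm_bound_of_unitary U.2 i e) (norm_nonneg _)
    (entry_norm_bound_of_unitary U.2 j e)

lemma integral_column_moment [μ.IsMulLeftInvariant] [IsProbabilityMeasure μ] (e i j : Fin N) :
    ∫ U : Matrix.unitaryGroup (Fin N) ℂ,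
      star ((U : Matrix (Fin N) (Fin N) ℂ) i e) * (U : Matrix (Fin N) (Fin N) ℂ) j e ∂μ =
      if i = j then (N : ℂ)⁻¹ else 0 := by
  split_ifs with hij
  · subst hij
    -- A transposition of rows moves the moment of any row `k` to row `i`.
    have hswap : ∀ k, ∫ U : Matrix.unitaryGroup (Fin N) ℂ,
        star ((U : Matrix (Fin N) (Fin N) ℂ) k e) * (U : Matrix (Fin N) (Fin N) ℂ) k e ∂μ =
        ∫ U : Matrix.unitaryGroup (Fin N) ℂ,
        star ((U : Matrix (Fin N) (Fin N) ℂ) i e) * (U : Matrix (Fin N) (Fin N) ℂ) i e ∂μ := by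
      intro k
      rw [← integral_mul_left_eq_self _
        (⟨_, permMatrix_mem_unitaryGroup (Equiv.swap k i)⟩ : Matrix.unitaryGroup (Fin N) ℂ)]
      simp [Equiv.Perm.permMatrix, PEquiv.toMatrix_toPEquiv_mul]
    have hsum := integral_finsetSum (μ := μ) Finset.univ
      (fun k _ => integrable_column_moment μ e k k)
    simp only [sum_star_mul_self_column, hswap] at hsum
    simp only [integral_const, probReal_univ, one_smul, Finset.sum_const, Finset.card_univ,
      Fintype.card_fin, nsmul_eq_mul] at hsum
    exact eq_inv_of_mul_eq_one_right hsum.symm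
  · have h := integral_mul_left_eq_self (μ := μ) (fun U : Matrix.unitaryGroup (Fin N) ℂ =>
        star ((U : Matrix (Fin N) (Fin N) ℂ) i e) * (U : Matrix (Fin N) (Fin N) ℂ) j e)
      ⟨_, signFlip_mem_unitaryGroup i⟩
    simp only [Submonoid.coe_mul, Matrix.diagonal_mul, if_true, if_neg (Ne.symm hij), one_mul,
      neg_mul, star_neg, integral_neg] at h
    exact self_eq_neg.mp h.symm

end ColumnMoments

/-- Haar average of a unitary statistical query: for any `N × N` complex matrices `W, V`,
the Haar average over unitaries `U` of `Re ⟨0| Uᴴ Wᴴ V U |0⟩` equals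
`N⁻¹ · Re (Tr (Wᴴ V))`. -/
theorem haar_unitary_qusq_average (N : ℕ) (hN : 0 < N)
    [MeasurableSpace (Matrix.unitaryGroup (Fin N) ℂ)]
    [BorelSpace (Matrix.unitaryGroup (Fin N) ℂ)]
    (μ : Measure (Matrix.unitaryGroup (Fin N) ℂ))
    [μ.IsHaarMeasure] [IsProbabilityMeasure μ]
    (e₀ : Fin N) (W V : Matrix (Fin N) (Fin N) ℂ) :
    ∫ U : Matrix.unitaryGroup (Fin N) ℂ,
        (((U : Matrix (Fin N) (Fin N) ℂ)ᴴ * Wᴴ * V * (U : Matrix (Fin N) (Fin N) ℂ))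
            e₀ e₀).re ∂μ =
      (N : ℝ)⁻¹ * ((Wᴴ * V).trace).re := by
  have hexp : ∀ U : Matrix.unitaryGroup (Fin N) ℂ,
      ((U : Matrix (Fin N) (Fin N) ℂ)ᴴ * Wᴴ * V * (U : Matrix (Fin N) (Fin N) ℂ)) e₀ e₀ =
      ∑ j, ∑ i, (Wᴴ * V) i j *
        (star ((U : Matrix (Fin N) (Fin N) ℂ) i e₀) * (U : Matrix (Fin N) (Fin N) ℂ) j e₀) := by
    intro U
    rw [Matrix.mul_assoc _ Wᴴ V, Matrix.mul_apply]
    refine Finset.sum_congr rfl fun j _ => ?_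
    rw [Matrix.mul_apply, Finset.sum_mul]
    refine Finset.sum_congr rfl fun i _ => ?_
    rw [Matrix.conjTranspose_apply]
    ring
  have hterm : ∀ i j, Integrable (fun U : Matrix.unitaryGroup (Fin N) ℂ => (Wᴴ * V) i j *
      (star ((U : Matrix (Fin N) (Fin N) ℂ) i e₀) * (U : Matrix (Fin N) (Fin N) ℂ) j e₀)) μ :=
    fun i j => (integrable_column_moment μ e₀ i j).const_mul _
  have hterm' := fun j => integrable_finsetSum (μ := μ) Finset.univ fun i _ => hterm i j
  simp only [hexp]
  have hre := integral_re (μ := μ) (integrable_finsetSum Finset.univ fun j _ => hterm' j)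
  simp only [RCLike.re_eq_complex_re] at hre
  rw [hre, integral_finsetSum _ fun j _ => hterm' j]
  simp only [integral_finsetSum _ fun i _ => hterm i _, integral_const_mul,
    integral_column_moment, mul_ite, mul_zero, Finset.sum_ite_eq', Finset.mem_univ, if_true]
  rw [← Finset.sum_mul, mul_comm, ← Complex.ofReal_natCast, ← Complex.ofReal_inv,
    Complex.re_ofReal_mul]
  rfl
end

section
/- Let N ≥ 2 be an integer and μ the Haar probability measure on the unitary group U(N) of N×N complex matrices. Then for all indices a,b,c,d,e,f,g,h ∈ Fin N: ∫ U, (U a b)·(U c d)·conj(U e f)·conj(U g h) dμ(U) = (δ(a,e)δ(b,f)δ(c,g)δ(d,h) + δ(a,g)δ(b,h)δ(c,e)δ(d,f)) / (N² − 1) − (δ(a,e)δ(b,h)δ(c,g)δ(d,f) + δ(a,g)δ(b,f)δ(c,e)δ(d,h)) / (N·(N² − 1)), where δ(x,y) = 1 if x = y and 0 otherwise. -/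
/-!
Only left invariance of `μ` is needed. Fix the column indices `b, d, f, h`, and regard the moment
as a tensor `T a c e g` in the row indices. Left invariance under

* diagonal phases forces `T a c e g = 0` unless `{a, c} = {e, g}` as multisets
  (`rowMoment_eq_zero`);
* permutation matrices makes `T a c a c = α` and `T a c c a = β` for all `a ≠ c`, and `T a a a a`
  independent of `a` (`rowMoment_perm`);
* a reflection with rows `(3/5, -4/5)`, `(-4/5, -3/5)` in a coordinate plane gives
  `T a a a a = α + β` (`rowMoment_diag`).

Hence `T a c e g = α δ(a,e) δ(c,g) + β δ(a,g) δ(c,e)` (`rowMoment_eq`), which is Schur–Weyl duality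
for two tensor factors. Contracting the row indices in the two possible ways and using `U* U = 1`
gives `N² α + N β = δ(b,f) δ(d,h)` and `N α + N² β = δ(b,h) δ(d,f)`; solving this linear system
yields the formula.
-/

open MeasureTheory

/-- Kronecker delta with values in `ℂ`. -/
noncomputable def kd {m : Type*} [DecidableEq m] (x y : m) : ℂ :=
  if x = y then 1 else 0

lemma exists_perm_pair {N : ℕ} {p q a c : Fin N} (hpq : p ≠ q) (hac : a ≠ c) :
    ∃ σ : Equiv.Perm (Fin N), σ p = a ∧ σ q = c := by
  refine ⟨Equiv.swap (Equiv.swap p a q) c * Equiv.swap p a, ?_, by simp⟩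
  have : a ≠ Equiv.swap p a q := fun H => hpq ((Equiv.swap p a).injective (by simpa using H))
  simp [Equiv.swap_apply_of_ne_of_ne this hac]

lemma sum_col {N : ℕ} (U : Matrix.unitaryGroup (Fin N) ℂ) (b f : Fin N) :
    ∑ a, (U : Matrix (Fin N) (Fin N) ℂ) a b *
      (starRingEnd ℂ) ((U : Matrix (Fin N) (Fin N) ℂ) a f) = kd b f := by
  have h1 := congrFun (congrFun (Matrix.mem_unitaryGroup_iff'.mp U.2) f) b
  rw [Matrix.mul_apply] at h1
  simp only [Matrix.star_apply, Matrix.one_apply] at h1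
  rw [kd]
  simp only [eq_comm (a := b), ← h1]
  exact Finset.sum_congr rfl fun a _ => mul_comm _ _

section SecondMoment

variable {N : ℕ} [MeasurableSpace (Matrix.unitaryGroup (Fin N) ℂ)]
  (μ : Measure (Matrix.unitaryGroup (Fin N) ℂ))

/-- The second moment `E[U a b · U c d · conj (U e f) · conj (U g h)]`, with the column indices
`b d f h` placed first so that it can be read as a tensor in the row indices `a c e g`. -/
noncomputable def rowMoment (b d f h a c e g : Fin N) : ℂ :=
  ∫ U : Matrix.unitaryGroup (Fin N) ℂ,
    (U : Matrix (Fin N) (Fin N) ℂ) a b * (U : Matrix (Fin N) (Fin N) ℂ) c d *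
      (starRingEnd ℂ) ((U : Matrix (Fin N) (Fin N) ℂ) e f) *
      (starRingEnd ℂ) ((U : Matrix (Fin N) (Fin N) ℂ) g h) ∂μ

lemma integrable_moment [BorelSpace (Matrix.unitaryGroup (Fin N) ℂ)] [IsProbabilityMeasure μ]
    (b d f h a c e g : Fin N) :
    Integrable (fun U : Matrix.unitaryGroup (Fin N) ℂ =>
      (U : Matrix (Fin N) (Fin N) ℂ) a b * (U : Matrix (Fin N) (Fin N) ℂ) c d *
      (starRingEnd ℂ) ((U : Matrix (Fin N) (Fin N) ℂ) e f) *
      (starRingEnd ℂ) ((U : Matrix (Fin N) (Fin N) ℂ) g h)) μ := by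
  have hc : ∀ i j : Fin N, Continuous
      (fun U : Matrix.unitaryGroup (Fin N) ℂ => (U : Matrix (Fin N) (Fin N) ℂ) i j) :=
    fun i j => continuous_subtype_val.matrix_elem i j
  have hcont := (((hc a b).mul (hc c d)).mul (Complex.continuous_conj.comp (hc e f))).mul
    (Complex.continuous_conj.comp (hc g h))
  refine Integrable.of_bound hcont.aestronglyMeasurable 1 (Filter.Eventually.of_forall fun U => ?_)
  have hb : ∀ i j : Fin N, ‖(U : Matrix (Fin N) (Fin N) ℂ) i j‖ ≤ 1 :=
    fun i j => entry_norm_bound_of_unitary U.2 i j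
  simp only [norm_mul, RCLike.norm_conj]
  exact mul_le_one₀ (mul_le_one₀ (mul_le_one₀ (hb _ _) (norm_nonneg _) (hb _ _))
    (norm_nonneg _) (hb _ _)) (norm_nonneg _) (hb _ _)

lemma sum_rowMoment_id [BorelSpace (Matrix.unitaryGroup (Fin N) ℂ)]
    [IsProbabilityMeasure μ] (b d f h : Fin N) :
    ∑ a, ∑ c, rowMoment μ b d f h a c a c = kd b f * kd d h := by
  have hI := fun a c => integrable_moment μ b d f h a c a c
  simp_rw [rowMoment, ← integral_finsetSum _ fun c _ => hI _ c]
  rw [← integral_finsetSum _ fun a _ => integrable_finsetSum _ fun c _ => hI a c]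
  have hconst : kd b f * kd d h = ∫ _ : Matrix.unitaryGroup (Fin N) ℂ, kd b f * kd d h ∂μ := by
    simp
  rw [hconst]
  congr 1
  funext U
  rw [← sum_col U b f, ← sum_col U d h, Finset.sum_mul_sum]
  exact Finset.sum_congr rfl fun a _ => Finset.sum_congr rfl fun c _ => by ring

lemma sum_rowMoment_flip [BorelSpace (Matrix.unitaryGroup (Fin N) ℂ)]
    [IsProbabilityMeasure μ] (b d f h : Fin N) :
    ∑ a, ∑ c, rowMoment μ b d f h a c c a = kd b h * kd d f := by
  rw [← sum_rowMoment_id μ b d h f]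
  refine Finset.sum_congr rfl fun a _ => Finset.sum_congr rfl fun c _ => ?_
  simp only [rowMoment]
  congr 1
  funext U
  ring

variable [BorelSpace (Matrix.unitaryGroup (Fin N) ℂ)] [μ.IsHaarMeasure]

lemma rowMoment_mul_left (V : Matrix.unitaryGroup (Fin N) ℂ) (b d f h a c e g : Fin N) :
    ∫ U : Matrix.unitaryGroup (Fin N) ℂ,
      ((V : Matrix (Fin N) (Fin N) ℂ) * (U : Matrix (Fin N) (Fin N) ℂ)) a b *
      ((V : Matrix (Fin N) (Fin N) ℂ) * (U : Matrix (Fin N) (Fin N) ℂ)) c d *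
      (starRingEnd ℂ) (((V : Matrix (Fin N) (Fin N) ℂ) * (U : Matrix (Fin N) (Fin N) ℂ)) e f) *
      (starRingEnd ℂ) (((V : Matrix (Fin N) (Fin N) ℂ) * (U : Matrix (Fin N) (Fin N) ℂ)) g h) ∂μ
      = rowMoment μ b d f h a c e g :=
  integral_mul_left_eq_self (μ := μ) (fun U : Matrix.unitaryGroup (Fin N) ℂ =>
      (U : Matrix (Fin N) (Fin N) ℂ) a b * (U : Matrix (Fin N) (Fin N) ℂ) c d *
      (starRingEnd ℂ) ((U : Matrix (Fin N) (Fin N) ℂ) e f) *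
      (starRingEnd ℂ) ((U : Matrix (Fin N) (Fin N) ℂ) g h)) V

/-- Invariance under the diagonal unitary with entry `i` at position `k` and `1` elsewhere. -/
lemma rowMoment_phase (k b d f h a c e g : Fin N) :
    (if a = k then Complex.I else 1) * (if c = k then Complex.I else 1) *
      (if e = k then -Complex.I else 1) * (if g = k then -Complex.I else 1) *
      rowMoment μ b d f h a c e g = rowMoment μ b d f h a c e g := by
  let φ : Fin N → ℂ := fun x => if x = k then Complex.I else 1
  have hV : Matrix.diagonal φ ∈ Matrix.unitaryGroup (Fin N) ℂ := by
    rw [Matrix.mem_unitaryGroup_iff, Matrix.star_eq_conjTranspose, Matrix.diagonal_conjTranspose,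
      Matrix.diagonal_mul_diagonal, ← Matrix.diagonal_one]
    congr 1
    funext x
    by_cases hx : x = k <;> simp [φ, hx]
  have hφ : ∀ x, (starRingEnd ℂ) (φ x) = if x = k then -Complex.I else 1 := by
    intro x
    by_cases hx : x = k <;> simp [φ, hx]
  rw [← hφ e, ← hφ g]
  conv_rhs => rw [← rowMoment_mul_left μ ⟨_, hV⟩]
  rw [rowMoment, ← integral_const_mul]
  congr 1
  funext U
  simp only [Matrix.diagonal_mul, map_mul]
  simp only [φ]
  ring

lemma rowMoment_eq_zero (b d f h a c e g : Fin N) (h1 : ¬(a = e ∧ c = g))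
    (h2 : ¬(a = g ∧ c = e)) : rowMoment μ b d f h a c e g = 0 := by
  -- The phase relation at an index whose multiplicities in `{a, c}` and `{e, g}` differ
  -- multiplies the moment by `i` or `-1`.
  have key : ∀ z : ℂ, z ≠ 1 → ∀ t : ℂ, z * t = t → t = 0 := by
    intro z hz t ht
    have : (z - 1) * t = 0 := by linear_combination ht
    exact (mul_eq_zero.mp this).resolve_left (sub_ne_zero.mpr hz)
  have nI : Complex.I ≠ 1 := fun H => by simpa using congrArg Complex.re H
  have n1 : (-1 : ℂ) ≠ 1 := by norm_num
  by_cases hae : a = e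
  · subst hae
    have hcg : c ≠ g := fun H => h1 ⟨rfl, H⟩
    have p := rowMoment_phase μ c b d f h a c a g
    by_cases hac : a = c
    · subst hac
      simp only [if_true, if_neg hcg.symm] at p
      refine key _ nI _ ?_
      linear_combination p + Complex.I * rowMoment μ b d f h a a a g * Complex.I_mul_I
    · simp only [if_true, if_neg hcg.symm, if_neg hac] at p
      exact key _ nI _ (by linear_combination p)
  · by_cases hag : a = g
    · subst hag
      have hce : c ≠ e := fun H => h2 ⟨rfl, H⟩
      have p := rowMoment_phase μ c b d f h a c e a
      by_cases hac : a = c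
      · subst hac
        simp only [if_true, if_neg hce.symm] at p
        refine key _ nI _ ?_
        linear_combination p + Complex.I * rowMoment μ b d f h a a e a * Complex.I_mul_I
      · simp only [if_true, if_neg hce.symm, if_neg hac] at p
        exact key _ nI _ (by linear_combination p)
    · have p := rowMoment_phase μ a b d f h a c e g
      simp only [if_true, if_neg (Ne.symm hae), if_neg (Ne.symm hag)] at p
      by_cases hca : c = a
      · simp only [if_pos hca] at p
        exact key _ n1 _ (by linear_combination p - rowMoment μ b d f h a c e g * Complex.I_mul_I)
      · simp only [if_neg hca] at p
        exact key _ nI _ (by linear_combination p)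

lemma rowMoment_perm (σ : Equiv.Perm (Fin N)) (b d f h a c e g : Fin N) :
    rowMoment μ b d f h (σ a) (σ c) (σ e) (σ g) = rowMoment μ b d f h a c e g := by
  have hV : σ.permMatrix ℂ ∈ Matrix.unitaryGroup (Fin N) ℂ := by
    rw [Matrix.mem_unitaryGroup_iff, Matrix.star_eq_conjTranspose, Matrix.conjTranspose_permMatrix,
      ← Matrix.permMatrix_mul]
    simp
  rw [← rowMoment_mul_left μ ⟨_, hV⟩ b d f h a c e g]
  simp [rowMoment, Equiv.Perm.permMatrix, PEquiv.toMatrix_toPEquiv_mul]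

/-- Invariance under the reflection `1 - (2/5) v vᵀ` with `v = e_p + 2 e_q`, whose row `p` is
`(3/5) e_p - (4/5) e_q`. -/
lemma rowMoment_diag [IsProbabilityMeasure μ] (b d f h p q : Fin N) (hpq : p ≠ q) :
    rowMoment μ b d f h p p p p =
      rowMoment μ b d f h p q p q + rowMoment μ b d f h p q q p := by
  let v : Fin N → ℂ := Pi.single p 1 + Pi.single q 2
  have hvs : star v = v := by
    simp only [v, star_add, ← Pi.single_star, star_one, star_ofNat]
  have hvv : v ⬝ᵥ v = 5 := by
    simp [v, hpq, hpq.symm]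
    norm_num
  have hV : (1 - (2 / 5 : ℂ) • Matrix.vecMulVec v v) ∈ Matrix.unitaryGroup (Fin N) ℂ := by
    have hs : star (1 - (2 / 5 : ℂ) • Matrix.vecMulVec v v) =
        1 - (2 / 5 : ℂ) • Matrix.vecMulVec v v := by
      rw [Matrix.star_eq_conjTranspose, Matrix.conjTranspose_sub, Matrix.conjTranspose_smul,
        Matrix.conjTranspose_vecMulVec, hvs]
      simp
    rw [Matrix.mem_unitaryGroup_iff, hs]
    simp only [sub_mul, mul_sub, one_mul, mul_one, smul_mul_assoc, mul_smul_comm,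
      Matrix.vecMulVec_mul_vecMulVec, hvv, Matrix.vecMulVec_smul, smul_smul]
    module
  let w : Fin 2 → ℂ := ![3 / 5, -(4 / 5)]
  let r : Fin 2 → Fin N := ![p, q]
  have hrow : ∀ (U : Matrix (Fin N) (Fin N) ℂ) (j : Fin N),
      ((1 - (2 / 5 : ℂ) • Matrix.vecMulVec v v) * U) p j = ∑ i, w i * U (r i) j := by
    intro U j
    rw [Matrix.sub_mul, Matrix.one_mul, Matrix.smul_mul, Matrix.vecMulVec_mul]
    simp [Matrix.vecMulVec_apply, v, w, r, Matrix.add_vecMul, hpq]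
    ring
  have hw : ∀ i, (starRingEnd ℂ) (w i) = w i := by
    intro i
    fin_cases i <;> simp [w, Complex.conj_ofNat]
  have key : rowMoment μ b d f h p p p p = ∑ i, ∑ j, ∑ k, ∑ l,
      w i * w j * w k * w l * rowMoment μ b d f h (r i) (r j) (r k) (r l) := by
    rw [← rowMoment_mul_left μ ⟨_, hV⟩]
    simp only [hrow, map_sum, map_mul, hw, rowMoment, ← integral_const_mul]
    have hI := fun i j k l : Fin 2 => (integrable_moment μ b d f h (r i) (r j) (r k) (r l)).const_mul
      (w i * w j * w k * w l)
    simp_rw [← integral_finsetSum _ fun l _ => hI _ _ _ l]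
    simp_rw [← integral_finsetSum _ fun k _ => integrable_finsetSum _ fun l _ => hI _ _ k l]
    simp_rw [← integral_finsetSum _ fun j _ => integrable_finsetSum _ fun k _ =>
      integrable_finsetSum _ fun l _ => hI _ j k l]
    rw [← integral_finsetSum _ fun i _ => integrable_finsetSum _ fun j _ =>
      integrable_finsetSum _ fun k _ => integrable_finsetSum _ fun l _ => hI i j k l]
    congr 1
    funext U
    simp only [Fin.sum_univ_two]
    ring
  have e1 : rowMoment μ b d f h q q q q = rowMoment μ b d f h p p p p := by
    simpa using rowMoment_perm μ (Equiv.swap p q) b d f h p p p p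
  have e2 : rowMoment μ b d f h q p q p = rowMoment μ b d f h p q p q := by
    simpa using rowMoment_perm μ (Equiv.swap p q) b d f h p q p q
  have e3 : rowMoment μ b d f h q p p q = rowMoment μ b d f h p q q p := by
    simpa using rowMoment_perm μ (Equiv.swap p q) b d f h p q q p
  have z := rowMoment_eq_zero μ b d f h
  have hqp := hpq.symm
  simp [Fin.sum_univ_two, w, r, e1, e2, e3, z p p p q, z p p q p, z p p q q, z p q p p,
    z q p p p, z p q q q, z q p q q, z q q p q, z q q q p, z q q p p, hpq, hqp] at key
  linear_combination (625 / 288 : ℂ) * key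

/-- The row tensor lies in the span of the identity and the flip. -/
lemma rowMoment_eq [IsProbabilityMeasure μ] (b d f h p q : Fin N) (hpq : p ≠ q)
    (a c e g : Fin N) :
    rowMoment μ b d f h a c e g = rowMoment μ b d f h p q p q * (kd a e * kd c g) +
      rowMoment μ b d f h p q q p * (kd a g * kd c e) := by
  by_cases hac : a = c
  · subst hac
    by_cases h1 : a = e ∧ a = g
    · obtain ⟨rfl, rfl⟩ := h1
      have := rowMoment_perm μ (Equiv.swap p a) b d f h p p p p
      rw [Equiv.swap_apply_left] at this
      rw [this, rowMoment_diag μ b d f h p q hpq]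
      simp [kd]
    · rw [rowMoment_eq_zero μ _ _ _ _ _ _ _ _ h1 fun H => h1 H.symm]
      have h2 : kd a e * kd a g = 0 := by
        by_cases h3 : a = e
        · have h4 : a ≠ g := fun h4 => h1 ⟨h3, h4⟩
          simp [kd, h4]
        · simp [kd, h3]
      rw [mul_comm (kd a g), h2]
      simp
  · obtain ⟨σ, rfl, rfl⟩ := exists_perm_pair hpq hac
    by_cases h1 : σ p = e ∧ σ q = g
    · obtain ⟨rfl, rfl⟩ := h1
      rw [rowMoment_perm]
      simp [kd, hpq]
    by_cases h2 : σ p = g ∧ σ q = e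
    · obtain ⟨rfl, rfl⟩ := h2
      rw [rowMoment_perm]
      simp [kd, hpq]
    rw [rowMoment_eq_zero μ _ _ _ _ _ _ _ _ h1 h2]
    simp only [kd, ← ite_and, ite_mul, one_mul, zero_mul, if_neg h1, if_neg h2]
    simp

end SecondMoment

/-- Second-moment Weingarten formula, entrywise: for Haar-random `U` in the unitary group
`U(N)` with `N ≥ 2`,
`E[U a b · U c d · conj (U e f) · conj (U g h)]
  = (δ(a,e)δ(b,f)δ(c,g)δ(d,h) + δ(a,g)δ(b,h)δ(c,e)δ(d,f)) / (N² − 1)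
    − (δ(a,e)δ(b,h)δ(c,g)δ(d,f) + δ(a,g)δ(b,f)δ(c,e)δ(d,h)) / (N(N² − 1))`. -/
theorem haar_unitary_second_moment (N : ℕ) (hN : 2 ≤ N)
    [MeasurableSpace (Matrix.unitaryGroup (Fin N) ℂ)]
    [BorelSpace (Matrix.unitaryGroup (Fin N) ℂ)]
    (μ : Measure (Matrix.unitaryGroup (Fin N) ℂ))
    [μ.IsHaarMeasure] [IsProbabilityMeasure μ]
    (a b c d e f g h : Fin N) :
    ∫ U : Matrix.unitaryGroup (Fin N) ℂ,
        (U : Matrix (Fin N) (Fin N) ℂ) a b * (U : Matrix (Fin N) (Fin N) ℂ) c d *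
          (starRingEnd ℂ) ((U : Matrix (Fin N) (Fin N) ℂ) e f) *
          (starRingEnd ℂ) ((U : Matrix (Fin N) (Fin N) ℂ) g h) ∂μ =
      (kd a e * kd b f * kd c g * kd d h + kd a g * kd b h * kd c e * kd d f) /
          ((N : ℂ) ^ 2 - 1) -
        (kd a e * kd b h * kd c g * kd d f + kd a g * kd b f * kd c e * kd d h) /
          ((N : ℂ) * ((N : ℂ) ^ 2 - 1)) := by
  have hpq : (⟨0, by omega⟩ : Fin N) ≠ ⟨1, by omega⟩ := by simp
  have key := rowMoment_eq μ b d f h _ _ hpq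
  have s1 := sum_rowMoment_id μ b d f h
  have s2 := sum_rowMoment_flip μ b d f h
  have main := key a c e g
  rw [Finset.sum_congr rfl fun a _ => Finset.sum_congr rfl fun c _ => key a c a c] at s1
  rw [Finset.sum_congr rfl fun a _ => Finset.sum_congr rfl fun c _ => key a c c a] at s2
  generalize rowMoment μ b d f h ⟨0, _⟩ ⟨1, _⟩ ⟨0, _⟩ ⟨1, _⟩ = α at main s1 s2
  generalize rowMoment μ b d f h ⟨0, _⟩ ⟨1, _⟩ ⟨1, _⟩ ⟨0, _⟩ = β at main s1 s2
  have k1 : ∀ x : Fin N, kd x x = 1 := fun x => if_pos rfl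
  have k2 : ∀ x : Fin N, ∑ y, kd x y * kd y x = 1 := fun x => by
    simp [kd]
  simp only [Finset.sum_add_distrib, ← Finset.mul_sum, k1, k2, mul_one, Finset.sum_const,
    Finset.card_univ, Fintype.card_fin, nsmul_eq_mul] at s1 s2
  have hN0 : (N : ℂ) ≠ 0 := by
    exact_mod_cast (by omega : N ≠ 0)
  have hN1 : (N : ℂ) ^ 2 - 1 ≠ 0 := by
    rw [sub_ne_zero]
    exact_mod_cast (by nlinarith : N ^ 2 ≠ 1)
  have hα : α = (kd b f * kd d h) / ((N : ℂ) ^ 2 - 1) -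
      (kd b h * kd d f) / ((N : ℂ) * ((N : ℂ) ^ 2 - 1)) := by
    field_simp
    linear_combination (N : ℂ) * s1 - s2
  have hβ : β = (kd b h * kd d f) / ((N : ℂ) ^ 2 - 1) -
      (kd b f * kd d h) / ((N : ℂ) * ((N : ℂ) ^ 2 - 1)) := by
    field_simp
    linear_combination (N : ℂ) * s2 - s1
  refine Eq.trans main ?_
  rw [hα, hβ]
  ring
end

section
/- Let N ≥ 2 be an integer, μ the Haar probability measure on the unitary group U(N) of N×N complex matrices, e₀ a fixed basis index, and A, B any N×N complex matrices. Then ∫ U, ((Uᴴ·A·U) e₀ e₀) · ((Uᴴ·B·U) e₀ e₀) dμ(U) = (Tr(A)·Tr(B) + Tr(A·B)) / (N·(N + 1)). -/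
open MeasureTheory Matrix

/-!
The random vector `ψ = U e₀` has the same distribution as `V ψ` for every unitary `V`, since Haar
measure is left invariant. After expanding both quadratic forms in coordinates, it suffices to show
`E[conj ψᵢ ψⱼ conj ψₖ ψₗ] = c (δᵢⱼ δₖₗ + δᵢₗ δⱼₖ)` with `c N (N + 1) = 1`.

* Multiplying a single coordinate by the imaginary unit shows that the moment vanishes unless
  `{i, k} = {j, l}` as multisets (`columnMoment_eq_zero`).
* The Householder reflection in the vector `(3/5) eᵢ + (4/5) conj w eⱼ`, with `|w| = 1`, replaces
  `ψᵢ` by `s ψᵢ - t w ψⱼ`, where `s = 7/25` and `t = 24/25`. Averaging `E|s ψᵢ - t w ψⱼ|⁴` over the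
  fourth roots of unity `w` gives
  `E|ψᵢ|⁴ = s⁴ E|ψᵢ|⁴ + t⁴ E|ψⱼ|⁴ + 4 s² t² E|ψᵢ|²|ψⱼ|²` (`columnMoment_rotation`).
  Exchanging `i` and `j` and subtracting yields `E|ψᵢ|⁴ = E|ψⱼ|⁴`, and then, because
  `s² + t² = 1`, also `E|ψᵢ|⁴ = 2 E|ψᵢ|²|ψⱼ|²`.
* The constant comes from integrating `‖ψ‖⁴ = 1` (`columnMoment_const`).
-/

section Moments

variable {N : ℕ}

lemma continuous_entry (i j : Fin N) :
    Continuous fun U : Matrix.unitaryGroup (Fin N) ℂ => U.1 i j :=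
  (continuous_apply_apply i j).comp continuous_subtype_val

/-- The diagonal unitary multiplying the `p`-th coordinate by the imaginary unit. -/
noncomputable def phaseUnitary (p : Fin N) : Matrix.unitaryGroup (Fin N) ℂ :=
  ⟨diagonal fun q => if q = p then Complex.I else 1, by
    rw [mem_unitaryGroup_iff, star_eq_conjTranspose, diagonal_conjTranspose, diagonal_mul_diagonal,
      ← diagonal_one]
    congr 1
    funext q
    by_cases h : q = p <;> simp [h]⟩

/-- The Householder reflection `1 - 2 v vᴴ` in a unit vector `v`. -/
noncomputable def householder (v : Fin N → ℂ) (hv : star v ⬝ᵥ v = 1) :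
    Matrix.unitaryGroup (Fin N) ℂ :=
  ⟨1 - (2 : ℂ) • vecMulVec v (star v), by
    rw [mem_unitaryGroup_iff, star_eq_conjTranspose]
    have h1 : (vecMulVec v (star v))ᴴ = vecMulVec v (star v) := by
      simp [conjTranspose_vecMulVec]
    have h2 : vecMulVec v (star v) * vecMulVec v (star v) = vecMulVec v (star v) := by
      rw [vecMulVec_mul_vecMulVec, hv, one_smul]
    rw [conjTranspose_sub, conjTranspose_smul, h1, star_ofNat]
    simp only [conjTranspose_one, sub_mul, mul_sub, one_mul, mul_one, smul_mul_assoc,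
      mul_smul_comm, h2]
    module⟩

/-- Rotating the coordinates `i ≠ j` so that `ψᵢ` becomes `(7/25) ψᵢ - (24/25) w ψⱼ`. -/
lemma exists_rotation {i j : Fin N} (hij : i ≠ j) {w : ℂ} (hw : star w * w = 1) :
    ∃ V : Matrix.unitaryGroup (Fin N) ℂ, ∀ (U : Matrix.unitaryGroup (Fin N) ℂ) (e₀ : Fin N),
      (V.1 * U.1) i e₀ = 7 / 25 * U.1 i e₀ - 24 / 25 * w * U.1 j e₀ := by
  have hw' : w * star w = 1 := by rw [mul_comm, hw]
  refine ⟨householder (Pi.single i (3 / 5) + Pi.single j (4 / 5 * star w)) ?_, fun U e₀ => ?_⟩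
  · simp only [dotProduct_add, dotProduct_single, Pi.star_apply, Pi.add_apply, Pi.single_eq_same,
      Pi.single_eq_of_ne hij, Pi.single_eq_of_ne hij.symm, star_add, star_mul', star_star,
      star_div₀, star_ofNat, star_zero]
    linear_combination (16 / 25) * hw'
  · simp only [householder, sub_mul, one_mul, smul_mul, Matrix.sub_apply, Matrix.smul_apply, vecMulVec_mul,
      vecMulVec_apply, Pi.add_apply, Pi.single_eq_same, Pi.single_eq_of_ne hij, add_zero,
      star_add, add_vecMul, ← Pi.single_star, single_vecMul, smul_eq_mul, Pi.smul_apply,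
      star_mul', star_star, star_div₀, star_ofNat, row_apply]
    ring

variable [MeasurableSpace (Matrix.unitaryGroup (Fin N) ℂ)]

/-- The mixed fourth moment `E[conj ψᵢ · ψⱼ · conj ψₖ · ψₗ]` of the coordinates of the random
vector `ψ = U e₀`, the `e₀`-th column of `U`. -/
noncomputable def columnMoment (μ : Measure (Matrix.unitaryGroup (Fin N) ℂ)) (e₀ i j k l : Fin N) :
    ℂ :=
  ∫ U : Matrix.unitaryGroup (Fin N) ℂ,
    star (U.1 i e₀) * U.1 j e₀ * (star (U.1 k e₀) * U.1 l e₀) ∂μ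

lemma columnMoment_def (μ : Measure (Matrix.unitaryGroup (Fin N) ℂ)) (e₀ i j k l : Fin N) :
    columnMoment μ e₀ i j k l = ∫ U : Matrix.unitaryGroup (Fin N) ℂ,
      star (U.1 i e₀) * U.1 j e₀ * (star (U.1 k e₀) * U.1 l e₀) ∂μ :=
  rfl

lemma columnMoment_swap (μ : Measure (Matrix.unitaryGroup (Fin N) ℂ))
    (e₀ i j : Fin N) :
    columnMoment μ e₀ i i j j = columnMoment μ e₀ j j i i := by
  simp only [columnMoment, mul_comm]

variable [BorelSpace (Matrix.unitaryGroup (Fin N) ℂ)]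
  (μ : Measure (Matrix.unitaryGroup (Fin N) ℂ))

lemma integrable_columnMoment [IsProbabilityMeasure μ] (e₀ i j k l : Fin N) :
    Integrable (fun U : Matrix.unitaryGroup (Fin N) ℂ =>
      star (U.1 i e₀) * U.1 j e₀ * (star (U.1 k e₀) * U.1 l e₀)) μ := by
  have hc := fun i => continuous_entry (N := N) i e₀
  refine Integrable.of_bound (C := 1)
    (((hc i).star.mul (hc j)).mul ((hc k).star.mul (hc l))).aestronglyMeasurable
    (Filter.Eventually.of_forall fun U => ?_)
  have hb := fun i => entry_norm_bound_of_unitary U.2 i e₀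
  simp only [norm_mul, norm_star]
  exact mul_le_one₀ (mul_le_one₀ (hb i) (norm_nonneg _) (hb j)) (by positivity)
    (mul_le_one₀ (hb k) (norm_nonneg _) (hb l))

/-- Left invariance, in coordinates: `ψ` and `V ψ` have the same moments. -/
lemma columnMoment_eq_rotated [μ.IsHaarMeasure] (V : Matrix.unitaryGroup (Fin N) ℂ)
    (e₀ i j k l : Fin N) :
    columnMoment μ e₀ i j k l = ∫ U : Matrix.unitaryGroup (Fin N) ℂ,
      star ((V.1 * U.1) i e₀) * (V.1 * U.1) j e₀ *
        (star ((V.1 * U.1) k e₀) * (V.1 * U.1) l e₀) ∂μ :=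
  (integral_mul_left_eq_self (μ := μ) (fun U : Matrix.unitaryGroup (Fin N) ℂ =>
    star (U.1 i e₀) * U.1 j e₀ * (star (U.1 k e₀) * U.1 l e₀)) V).symm

/-- Invariance under the phase unitaries kills every moment in which some index `p` occurs
a different number of times among the conjugated and the unconjugated coordinates. -/
lemma columnMoment_eq_zero [μ.IsHaarMeasure] (e₀ i j k l : Fin N)
    (h : ¬ ((i = j ∧ k = l) ∨ (i = l ∧ j = k))) : columnMoment μ e₀ i j k l = 0 := by
  have key : ∀ p : Fin N, columnMoment μ e₀ i j k l =
      (star (if i = p then Complex.I else 1) * (if j = p then Complex.I else 1) *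
        (star (if k = p then Complex.I else 1) * (if l = p then Complex.I else 1))) *
        columnMoment μ e₀ i j k l := by
    intro p
    conv_lhs => rw [columnMoment_eq_rotated μ (phaseUnitary p)]
    rw [columnMoment, ← integral_const_mul]
    congr 1
    funext U
    simp only [phaseUnitary, diagonal_mul, star_mul']
    ring
  by_contra h0
  have count : ∀ p : Fin N, (if i = p then 1 else 0) + (if k = p then 1 else 0) =
      (if j = p then 1 else 0) + (if l = p then 1 else 0 : ℕ) := by
    intro p
    have hp := mul_right_cancel₀ h0 ((one_mul _).trans (key p))
    revert hp
    split_ifs <;> norm_num [Complex.ext_iff]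
  have h1 := count i
  have h2 := count k
  grind

/-- Averaging `E|(7/25) ψᵢ - (24/25) w ψⱼ|⁴`, which equals `E|ψᵢ|⁴`, over the four phases
`w ∈ {1, -1, i, -i}` removes all the terms that are not invariant under phases. -/
lemma columnMoment_rotation [μ.IsHaarMeasure] [IsProbabilityMeasure μ] (e₀ : Fin N) {i j : Fin N}
    (hij : i ≠ j) :
    columnMoment μ e₀ i i i i = (7 / 25) ^ 4 * columnMoment μ e₀ i i i i +
      (24 / 25) ^ 4 * columnMoment μ e₀ j j j j +
      4 * (7 / 25) ^ 2 * (24 / 25) ^ 2 * columnMoment μ e₀ i i j j := by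
  have rot : ∀ w : ℂ, star w * w = 1 →
      Integrable (fun U : Matrix.unitaryGroup (Fin N) ℂ =>
        (star (7 / 25 * U.1 i e₀ - 24 / 25 * w * U.1 j e₀) *
          (7 / 25 * U.1 i e₀ - 24 / 25 * w * U.1 j e₀)) ^ 2) μ ∧
      columnMoment μ e₀ i i i i = ∫ U : Matrix.unitaryGroup (Fin N) ℂ,
        (star (7 / 25 * U.1 i e₀ - 24 / 25 * w * U.1 j e₀) *
          (7 / 25 * U.1 i e₀ - 24 / 25 * w * U.1 j e₀)) ^ 2 ∂μ := by
    intro w hw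
    obtain ⟨V, hV⟩ := exists_rotation hij hw
    have hint := (integrable_columnMoment μ e₀ i i i i).comp_mul_left V
    have heq := columnMoment_eq_rotated μ V e₀ i i i i
    simp only [UnitaryGroup.mul_val, hV, ← sq] at hint heq
    exact ⟨hint, heq⟩
  obtain ⟨i1, e1⟩ := rot 1 (by simp)
  obtain ⟨i2, e2⟩ := rot (-1) (by simp)
  obtain ⟨i3, e3⟩ := rot Complex.I (by simp)
  obtain ⟨i4, e4⟩ := rot (-Complex.I) (by simp)
  have hsum := (((integral_add (i1.add i2 |>.add i3) i4).trans
    (congrArg (· + _) ((integral_add (i1.add i2) i3).trans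
      (congrArg (· + _) (integral_add i1 i2))))))
  simp only [Pi.add_apply] at hsum
  rw [← e1, ← e2, ← e3, ← e4] at hsum
  have ja := (integrable_columnMoment μ e₀ i i i i).const_mul (4 * (7 / 25) ^ 4)
  have jb := (integrable_columnMoment μ e₀ j j j j).const_mul (4 * (24 / 25) ^ 4)
  have jc := (integrable_columnMoment μ e₀ i i j j).const_mul (16 * (7 / 25) ^ 2 * (24 / 25) ^ 2)
  have hsum' := (integral_add (ja.add jb) jc).trans (congrArg (· + _) (integral_add ja jb))
  simp only [Pi.add_apply, integral_const_mul] at hsum'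
  have hpt : ∀ x y : ℂ,
      (star (7 / 25 * x - 24 / 25 * 1 * y) * (7 / 25 * x - 24 / 25 * 1 * y)) ^ 2 +
      (star (7 / 25 * x - 24 / 25 * -1 * y) * (7 / 25 * x - 24 / 25 * -1 * y)) ^ 2 +
      (star (7 / 25 * x - 24 / 25 * Complex.I * y) * (7 / 25 * x - 24 / 25 * Complex.I * y)) ^ 2 +
      (star (7 / 25 * x - 24 / 25 * -Complex.I * y) * (7 / 25 * x - 24 / 25 * -Complex.I * y)) ^ 2 =
      4 * (7 / 25) ^ 4 * (star x * x * (star x * x)) +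
      4 * (24 / 25) ^ 4 * (star y * y * (star y * y)) +
      16 * (7 / 25) ^ 2 * (24 / 25) ^ 2 * (star x * x * (star y * y)) := by
    intro x y
    have hI : star Complex.I = -Complex.I := by simp
    simp only [star_sub, star_mul', star_div₀, star_ofNat, star_neg, star_one, hI]
    have h2 := Complex.I_sq
    have h4 : Complex.I ^ 4 = 1 := Complex.I_pow_four
    ring_nf
    simp only [h2, h4]
    ring
  simp only [hpt] at hsum
  rw [hsum'] at hsum
  simp only [← columnMoment_def] at hsum
  linear_combination -hsum / 4

lemma columnMoment_diag [μ.IsHaarMeasure] [IsProbabilityMeasure μ] (e₀ i : Fin N) :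
    columnMoment μ e₀ i i i i = columnMoment μ e₀ e₀ e₀ e₀ e₀ := by
  by_cases h : i = e₀
  · rw [h]
  · have h1 := columnMoment_rotation μ e₀ h
    have h2 := columnMoment_rotation μ e₀ (Ne.symm h)
    rw [columnMoment_swap μ e₀ e₀ i] at h2
    linear_combination (h1 - h2) / (1 - (7 / 25) ^ 4 + (24 / 25) ^ 4)

lemma columnMoment_offdiag [μ.IsHaarMeasure] [IsProbabilityMeasure μ] (e₀ : Fin N) {i j : Fin N}
    (hij : i ≠ j) :
    columnMoment μ e₀ i i j j = columnMoment μ e₀ e₀ e₀ e₀ e₀ / 2 := by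
  have h1 := columnMoment_rotation μ e₀ hij
  rw [columnMoment_diag μ e₀ i, columnMoment_diag μ e₀ j] at h1
  linear_combination -h1 / (4 * (7 / 25) ^ 2 * (24 / 25) ^ 2)

/-- The fourth moments up to the normalising constant, which is fixed in `columnMoment_const`. -/
lemma columnMoment_eq [μ.IsHaarMeasure] [IsProbabilityMeasure μ] (e₀ i j k l : Fin N) :
    columnMoment μ e₀ i j k l = columnMoment μ e₀ e₀ e₀ e₀ e₀ / 2 *
      ((if i = j then 1 else 0) * (if k = l then 1 else 0) +
        (if i = l then 1 else 0) * (if j = k then 1 else 0)) := by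
  by_cases h : (i = j ∧ k = l) ∨ (i = l ∧ j = k)
  · by_cases hik : i = k
    · obtain ⟨rfl, rfl, rfl⟩ : i = j ∧ i = k ∧ i = l := by grind
      rw [columnMoment_diag]
      simp
      ring
    · rcases h with ⟨rfl, rfl⟩ | ⟨rfl, rfl⟩
      · rw [columnMoment_offdiag μ e₀ hik]
        simp [hik]
      · have : columnMoment μ e₀ i j j i = columnMoment μ e₀ i i j j := by
          unfold columnMoment
          congr 1
          funext U
          ring
        rw [this, columnMoment_offdiag μ e₀ hik]
        simp [hik]
  · rw [columnMoment_eq_zero μ e₀ i j k l h]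
    have : ((if i = j then 1 else 0) * (if k = l then 1 else 0) +
        (if i = l then 1 else 0) * (if j = k then 1 else 0) : ℂ) = 0 := by
      rw [not_or, not_and_or, not_and_or] at h
      rcases h with ⟨h1 | h1, h2 | h2⟩ <;> simp [h1, h2]
    rw [this, mul_zero]

/-- Integrating `‖ψ‖⁴ = 1` determines the constant. -/
lemma columnMoment_const [μ.IsHaarMeasure] [IsProbabilityMeasure μ] (e₀ : Fin N) :
    columnMoment μ e₀ e₀ e₀ e₀ e₀ / 2 * ((N : ℂ) * (N + 1)) = 1 := by
  have hnorm : ∀ U : Matrix.unitaryGroup (Fin N) ℂ, ∑ i, star (U.1 i e₀) * U.1 i e₀ = 1 := by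
    intro U
    have := congrFun (congrFun (mem_unitaryGroup_iff'.1 U.2) e₀) e₀
    simpa [mul_apply, star_apply] using this
  have h1 : ∑ i, ∑ k, columnMoment μ e₀ i i k k = 1 := by
    simp only [columnMoment]
    simp_rw [← integral_finsetSum _ fun k _ => integrable_columnMoment μ e₀ _ _ k k]
    rw [← integral_finsetSum _ fun i _ =>
      integrable_finsetSum _ fun k _ => integrable_columnMoment μ e₀ i i k k]
    simp_rw [← Finset.mul_sum, ← Finset.sum_mul, hnorm]
    simp
  refine Eq.trans ?_ h1
  have hM := columnMoment_eq μ e₀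
  generalize columnMoment μ e₀ e₀ e₀ e₀ e₀ / 2 = c at hM ⊢
  simp only [hM, if_true, mul_one, ← Finset.mul_sum]
  congr 1
  simp [Finset.sum_add_distrib]
  ring

end Moments

/-- Second moment of expectation values over Haar-random pure states: for `N ≥ 2` and any
`N × N` complex matrices `A, B`,
`E_U[⟨0|Uᴴ A U|0⟩ · ⟨0|Uᴴ B U|0⟩] = (Tr A · Tr B + Tr (A B)) / (N(N+1))`. -/
theorem haar_unitary_state_second_moment (N : ℕ) (hN : 2 ≤ N)
    [MeasurableSpace (Matrix.unitaryGroup (Fin N) ℂ)]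
    [BorelSpace (Matrix.unitaryGroup (Fin N) ℂ)]
    (μ : Measure (Matrix.unitaryGroup (Fin N) ℂ))
    [μ.IsHaarMeasure] [IsProbabilityMeasure μ]
    (e₀ : Fin N) (A B : Matrix (Fin N) (Fin N) ℂ) :
    ∫ U : Matrix.unitaryGroup (Fin N) ℂ,
        (((U : Matrix (Fin N) (Fin N) ℂ)ᴴ * A * (U : Matrix (Fin N) (Fin N) ℂ)) e₀ e₀) *
          (((U : Matrix (Fin N) (Fin N) ℂ)ᴴ * B * (U : Matrix (Fin N) (Fin N) ℂ)) e₀ e₀)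
          ∂μ =
      (A.trace * B.trace + (A * B).trace) / ((N : ℂ) * ((N : ℂ) + 1)) := by
  have hexp : ∀ (C : Matrix (Fin N) (Fin N) ℂ) (U : Matrix.unitaryGroup (Fin N) ℂ),
      (U.1ᴴ * C * U.1) e₀ e₀ = ∑ p : Fin N × Fin N,
        C p.1 p.2 * (star (U.1 p.1 e₀) * U.1 p.2 e₀) := by
    intro C U
    simp only [mul_apply, Finset.sum_mul, conjTranspose_apply]
    rw [Finset.sum_comm, Fintype.sum_prod_type]
    exact Finset.sum_congr rfl fun i _ => Finset.sum_congr rfl fun j _ => by ring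
  have hint : ∀ p q : Fin N × Fin N, Integrable (fun U : Matrix.unitaryGroup (Fin N) ℂ =>
      A p.1 p.2 * B q.1 q.2 *
        (star (U.1 p.1 e₀) * U.1 p.2 e₀ * (star (U.1 q.1 e₀) * U.1 q.2 e₀))) μ :=
    fun p q => (integrable_columnMoment μ e₀ p.1 p.2 q.1 q.2).const_mul _
  have hsum : ∀ U : Matrix.unitaryGroup (Fin N) ℂ,
      (U.1ᴴ * A * U.1) e₀ e₀ * (U.1ᴴ * B * U.1) e₀ e₀ =
      ∑ p : Fin N × Fin N, ∑ q : Fin N × Fin N, A p.1 p.2 * B q.1 q.2 *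
        (star (U.1 p.1 e₀) * U.1 p.2 e₀ * (star (U.1 q.1 e₀) * U.1 q.2 e₀)) := by
    intro U
    rw [hexp, hexp, Finset.sum_mul_sum]
    exact Finset.sum_congr rfl fun i _ => Finset.sum_congr rfl fun j _ => by ring
  have hc := columnMoment_const μ e₀
  have hM := columnMoment_eq μ e₀
  generalize columnMoment μ e₀ e₀ e₀ e₀ e₀ / 2 = c at hc hM
  simp_rw [hsum]
  rw [integral_finsetSum _ fun p _ => integrable_finsetSum _ fun q _ => hint p q]
  simp_rw [integral_finsetSum _ fun q _ => hint _ q, integral_const_mul, ← columnMoment_def, hM]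
  rw [eq_div_iff (right_ne_zero_of_mul_eq_one hc)]
  have hcontract : ∑ p : Fin N × Fin N, ∑ q : Fin N × Fin N, A p.1 p.2 * B q.1 q.2 *
      (c * ((if p.1 = p.2 then 1 else 0) * (if q.1 = q.2 then 1 else 0) +
        (if p.1 = q.2 then 1 else 0) * (if p.2 = q.1 then 1 else 0))) =
      c * (A.trace * B.trace + (A * B).trace) := by
    simp only [Fintype.sum_prod_type, mul_add, Finset.sum_add_distrib, trace, diag_apply, mul_apply,
      Finset.mul_sum, Finset.sum_mul]
    simp
    rw [Finset.sum_comm]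
    simp only [mul_comm]
  rw [hcontract]
  linear_combination (A.trace * B.trace + (A * B).trace) * hc
end

section
/- Let n ≥ 1, N = 2^n, μ the Haar probability measure on the unitary group U(N) of N×N complex matrices, and e₀ a fixed basis index. Let s, t : Fin n → Fin 4 be two distinct Pauli strings, each containing at least one non-identity letter (i.e., s i ≠ 0 for some i and t j ≠ 0 for some j), with associated n-qubit Pauli string matrices P(s), P(t). Then ∫ U, ((Uᴴ·P(s)·U) e₀ e₀)·((Uᴴ·P(t)·U) e₀ e₀) dμ(U) = 0. -/
/-!
Left invariance of Haar measure under a Pauli string `V = P(r)` proves the claim without any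
second-moment formula. Conjugation by `V` sends `P(s)` to `± P(s)`, with sign `-1` exactly when the
two anticommute (`pauliString_conj`). Since `s ≠ t`, they differ at some site `i`, and some
single-qubit Pauli matrix anticommutes with exactly one of `σ(s i)`, `σ(t i)`
(`exists_pauliSign_mul`). Putting that letter at site `i` of `r` and the identity elsewhere, the
substitution `U ↦ V U` negates the integrand, so the integral equals its own negative.
-/

open MeasureTheory Matrix
open scoped Kronecker

/-- The single-qubit Pauli matrices: `I`, `X`, `Y`, `Z`. -/
noncomputable def pauli : Fin 4 → Matrix (Fin 2) (Fin 2) ℂ :=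
  ![1, !![0, 1; 1, 0], !![0, -Complex.I; Complex.I, 0], !![1, 0; 0, -1]]

/-- Reindexing equivalence `Fin 2 × Fin (2^n) ≃ Fin (2^(n+1))`. -/
def qubitProdEquiv (n : ℕ) : Fin 2 × Fin (2 ^ n) ≃ Fin (2 ^ (n + 1)) :=
  finProdFinEquiv.trans (finCongr (by rw [pow_succ]; ring))

/-- Iterated Kronecker product of a family of `2 × 2` complex matrices, as a
`2^n × 2^n` matrix. -/
noncomputable def kronPow : (n : ℕ) → (Fin n → Matrix (Fin 2) (Fin 2) ℂ) →
    Matrix (Fin (2 ^ n)) (Fin (2 ^ n)) ℂ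
  | 0, _ => 1
  | n + 1, M =>
      Matrix.reindex (qubitProdEquiv n) (qubitProdEquiv n)
        ((M 0) ⊗ₖ kronPow n fun i => M i.succ)

/-- The `n`-qubit Pauli string `σ(s 0) ⊗ σ(s 1) ⊗ ⋯ ⊗ σ(s (n−1))`. -/
noncomputable def pauliString (n : ℕ) (s : Fin n → Fin 4) :
    Matrix (Fin (2 ^ n)) (Fin (2 ^ n)) ℂ :=
  kronPow n fun i => pauli (s i)

/-- The sign `ε` in `σ(a)ᴴ σ(b) σ(a) = ε σ(b)`: `1` if the two Pauli matrices commute and `-1` if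
they anticommute. -/
noncomputable def pauliSign (a b : Fin 4) : ℂ :=
  if a = 0 ∨ b = 0 ∨ a = b then 1 else -1

lemma pauli_conj (a b : Fin 4) :
    (pauli a)ᴴ * pauli b * pauli a = pauliSign a b • pauli b := by
  fin_cases a <;> fin_cases b <;> ext x y <;> fin_cases x <;> fin_cases y <;>
    simp [pauli, pauliSign, Matrix.mul_apply, Fin.sum_univ_two]

lemma pauli_conjTranspose_mul_self (a : Fin 4) : (pauli a)ᴴ * pauli a = 1 := by
  fin_cases a <;> ext x y <;> fin_cases x <;> fin_cases y <;>
    simp [pauli, Matrix.mul_apply, Fin.sum_univ_two]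

lemma exists_pauliSign_mul {b c : Fin 4} (h : b ≠ c) :
    ∃ a, pauliSign a b * pauliSign a c = -1 := by
  -- If one of `b`, `c` is the identity, any non-identity `a` different from the other works;
  -- otherwise `a = b` commutes with `b` and anticommutes with `c`.
  by_cases hb : b = 0
  · by_cases hc : c = 1
    · exact ⟨2, by subst hb hc; simp [pauliSign]⟩
    · refine ⟨1, ?_⟩
      have hc0 : c ≠ 0 := fun h0 => h (hb.trans h0.symm)
      simp [pauliSign, hb, hc0, Ne.symm hc]
  · by_cases hc : c = 0
    · by_cases hb1 : b = 1
      · exact ⟨2, by subst hb1 hc; simp [pauliSign]⟩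
      · exact ⟨1, by simp [pauliSign, hb, hc, Ne.symm hb1]⟩
    · exact ⟨b, by simp [pauliSign, hb, hc, h]⟩

lemma kronPow_mul (n : ℕ) (A B : Fin n → Matrix (Fin 2) (Fin 2) ℂ) :
    kronPow n A * kronPow n B = kronPow n fun i => A i * B i := by
  induction n with
  | zero => simp [kronPow]
  | succ n ih =>
    simp only [kronPow, Matrix.reindex_apply, Matrix.submatrix_mul_equiv, ← ih,
      Matrix.mul_kronecker_mul]

lemma kronPow_conjTranspose (n : ℕ) (A : Fin n → Matrix (Fin 2) (Fin 2) ℂ) :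
    (kronPow n A)ᴴ = kronPow n fun i => (A i)ᴴ := by
  induction n with
  | zero => simp [kronPow]
  | succ n ih =>
    simp only [kronPow, Matrix.reindex_apply, Matrix.conjTranspose_submatrix,
      Matrix.conjTranspose_kronecker, ih]

lemma kronPow_one (n : ℕ) : kronPow n (fun _ => 1) = 1 := by
  induction n with
  | zero => rfl
  | succ n ih => simp [kronPow, ih]

lemma kronPow_smul (n : ℕ) (c : Fin n → ℂ) (A : Fin n → Matrix (Fin 2) (Fin 2) ℂ) :
    kronPow n (fun i => c i • A i) = (∏ i, c i) • kronPow n A := by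
  induction n with
  | zero => simp [kronPow]
  | succ n ih =>
    simp only [kronPow, ih, Fin.prod_univ_succ, Matrix.smul_kronecker, Matrix.kronecker_smul,
      smul_smul, Matrix.reindex_apply, Matrix.submatrix_smul, Pi.smul_apply]
    rw [mul_comm]

lemma pauliString_conj (n : ℕ) (r s : Fin n → Fin 4) :
    (pauliString n r)ᴴ * pauliString n s * pauliString n r =
      (∏ i, pauliSign (r i) (s i)) • pauliString n s := by
  simp only [pauliString, kronPow_conjTranspose, kronPow_mul, pauli_conj, kronPow_smul]

lemma pauliString_mem_unitaryGroup (n : ℕ) (r : Fin n → Fin 4) :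
    pauliString n r ∈ Matrix.unitaryGroup (Fin (2 ^ n)) ℂ := by
  rw [Matrix.mem_unitaryGroup_iff', Matrix.star_eq_conjTranspose]
  simp only [pauliString, kronPow_conjTranspose, kronPow_mul, pauli_conjTranspose_mul_self,
    kronPow_one]

lemma prod_pauliSign_single {n : ℕ} (i : Fin n) (a : Fin 4) (s : Fin n → Fin 4) :
    ∏ j, pauliSign ((Pi.single i a : Fin n → Fin 4) j) (s j) = pauliSign a (s i) := by
  rw [Finset.prod_eq_single i]
  · simp
  · intro j _ hj
    simp [pauliSign, hj]
  · simp

/-- Distinct non-identity Pauli observables are orthogonal under the correlational-query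
inner product over Haar-random pure states: for distinct Pauli strings `s ≠ t`, each with
at least one non-identity letter,
`E_U[⟨0|Uᴴ P(s) U|0⟩ · ⟨0|Uᴴ P(t) U|0⟩] = 0`. -/
theorem haar_pauli_orthogonality (n : ℕ) (hn : 1 ≤ n)
    [MeasurableSpace (Matrix.unitaryGroup (Fin (2 ^ n)) ℂ)]
    [BorelSpace (Matrix.unitaryGroup (Fin (2 ^ n)) ℂ)]
    (μ : Measure (Matrix.unitaryGroup (Fin (2 ^ n)) ℂ))
    [μ.IsHaarMeasure] [IsProbabilityMeasure μ]
    (e₀ : Fin (2 ^ n)) (s t : Fin n → Fin 4) (hst : s ≠ t)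
    (hs : ∃ i : Fin n, s i ≠ 0) (ht : ∃ j : Fin n, t j ≠ 0) :
    ∫ U : Matrix.unitaryGroup (Fin (2 ^ n)) ℂ,
        (((U : Matrix (Fin (2 ^ n)) (Fin (2 ^ n)) ℂ)ᴴ * pauliString n s *
              (U : Matrix (Fin (2 ^ n)) (Fin (2 ^ n)) ℂ)) e₀ e₀) *
          (((U : Matrix (Fin (2 ^ n)) (Fin (2 ^ n)) ℂ)ᴴ * pauliString n t *
              (U : Matrix (Fin (2 ^ n)) (Fin (2 ^ n)) ℂ)) e₀ e₀) ∂μ = 0 := by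
  obtain ⟨i, hi⟩ := Function.ne_iff.mp hst
  obtain ⟨a, ha⟩ := exists_pauliSign_mul hi
  let r : Fin n → Fin 4 := Pi.single i a
  let V : Matrix.unitaryGroup (Fin (2 ^ n)) ℂ :=
    ⟨pauliString n r, pauliString_mem_unitaryGroup n r⟩
  have key (u : Fin n → Fin 4) (U : Matrix.unitaryGroup (Fin (2 ^ n)) ℂ) :
      ((V * U : Matrix.unitaryGroup (Fin (2 ^ n)) ℂ) : Matrix (Fin (2 ^ n)) (Fin (2 ^ n)) ℂ)ᴴ *
          pauliString n u *
          ((V * U : Matrix.unitaryGroup (Fin (2 ^ n)) ℂ) :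
            Matrix (Fin (2 ^ n)) (Fin (2 ^ n)) ℂ) =
        pauliSign a (u i) • ((U : Matrix (Fin (2 ^ n)) (Fin (2 ^ n)) ℂ)ᴴ * pauliString n u *
          (U : Matrix (Fin (2 ^ n)) (Fin (2 ^ n)) ℂ)) := by
    have hconj := pauliString_conj n r u
    rw [prod_pauliSign_single] at hconj
    rw [← Matrix.smul_mul, ← Matrix.mul_smul, ← hconj]
    simp only [V, Submonoid.coe_mul, Matrix.conjTranspose_mul, Matrix.mul_assoc]
  rw [← self_eq_neg, ← integral_neg]
  rw [← integral_mul_left_eq_self (μ := μ) _ V]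
  refine integral_congr_ae (.of_forall fun U => ?_)
  simp only [key, Matrix.smul_apply, smul_eq_mul]
  linear_combination
    (((U : Matrix (Fin (2 ^ n)) (Fin (2 ^ n)) ℂ)ᴴ * pauliString n s *
        (U : Matrix (Fin (2 ^ n)) (Fin (2 ^ n)) ℂ)) e₀ e₀) *
      (((U : Matrix (Fin (2 ^ n)) (Fin (2 ^ n)) ℂ)ᴴ * pauliString n t *
        (U : Matrix (Fin (2 ^ n)) (Fin (2 ^ n)) ℂ)) e₀ e₀) * ha
end
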